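/- Let S be the gluing of numerical semigroups S_1 and S_2 determined by p ∈ S_1 and q ∈ S_2, let s ∈ S_1, and let n = min{n ∈ ℕ : n·p ∉ AP(S_1,s)}. The following are equivalent: (1) AP(S, qs) is a homogeneous subset of S; (2) AP(S_1,s) is a homogeneous subset of S_1, AP(S_2, nq) is a homogeneous subset of S_2, and if n > 1 then ord_{S_1}(p) = ord_{S_2}(q). -/

import Mathlib

open scoped BigOperators

/-- The value `Σ aᵢ nᵢ` of a tuple of coefficients `a` w.r.t. the generators `n`. -/
def sval {d : ℕ} (n : Fin d → ℕ) (a : Fin d → ℕ) : ℕ := ∑ i, a i * n i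

/-- The total length `Σ aᵢ` of a factorization. -/
def tlen {d : ℕ} (a : Fin d → ℕ) : ℕ := ∑ i, a i

/-- The submonoid of `ℕ` generated by `n`. -/
def gen {d : ℕ} (n : Fin d → ℕ) : Set ℕ := {s : ℕ | ∃ a : Fin d → ℕ, s = sval n a}

/-- The Apéry set of the semigroup generated by `n` with respect to `s`:
elements `x` of the semigroup such that `x - s` is not in the semigroup. -/
def Apery {d : ℕ} (n : Fin d → ℕ) (s : ℕ) : Set ℕ :=
  {x : ℕ | x ∈ gen n ∧ ¬ ∃ y ∈ gen n, x = s + y}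

/-- A subset `T` is homogeneous if every nonzero element of `T` has all its
factorizations of the same length. -/
def HomogSet {d : ℕ} (n : Fin d → ℕ) (T : Set ℕ) : Prop :=
  ∀ t ∈ T, t ≠ 0 → ∀ a b : Fin d → ℕ, sval n a = t → sval n b = t → tlen a = tlen b

/-- The order of `s`: the maximal length of a factorization of `s`. -/
noncomputable def ordS {d : ℕ} (n : Fin d → ℕ) (s : ℕ) : ℕ :=
  sSup {l : ℕ | ∃ a : Fin d → ℕ, sval n a = s ∧ tlen a = l}

/-- The torsion set of the semigroup generated by `n`, with respect to the
generator of index `i0` (the smallest generator). -/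
noncomputable def Torsion {d : ℕ} (n : Fin d → ℕ) (i0 : Fin d) : Set ℕ :=
  {s : ℕ | s ∈ gen n ∧ ∃ c : ℕ, 0 < c ∧ ordS n s + c < ordS n (s + c * n i0)}

/-- `n` is a minimal system of generators: any expression of a generator as a
nonnegative combination of the generators has total coefficient sum one. -/
def MinGen {d : ℕ} (n : Fin d → ℕ) : Prop :=
  ∀ r : Fin d, ∀ a : Fin d → ℕ, n r = sval n a → tlen a = 1

/-- `n` generates a numerical semigroup (cofinite in `ℕ`). -/
def IsNumerical {d : ℕ} (n : Fin d → ℕ) : Prop := {x : ℕ | x ∉ gen n}.Finite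

/-- The monomial `x^a = Π xᵢ^{aᵢ}`. -/
noncomputable def monom (k : Type*) [CommRing k] {d : ℕ} (a : Fin d → ℕ) :
    MvPolynomial (Fin d) k :=
  ∏ i, (MvPolynomial.X i : MvPolynomial (Fin d) k) ^ a i

/-- The toric ideal `I_S`: kernel of `k[x₁,…,x_d] → k[t]`, `xᵢ ↦ t^{nᵢ}`. -/
noncomputable def toricIdeal (k : Type*) [CommRing k] {d : ℕ} (n : Fin d → ℕ) :
    Ideal (MvPolynomial (Fin d) k) :=
  RingHom.ker (MvPolynomial.aeval (R := k)
    (fun i => (Polynomial.X : Polynomial k) ^ n i)).toRingHom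

/-- `E` is a minimal generating set of the ideal `I`: it spans `I` and no
proper subset spans `I`. -/
def IsMinGenSet {R : Type*} [CommRing R] (I : Ideal R) (E : Set R) : Prop :=
  Ideal.span E = I ∧ ∀ E' : Set R, E' ⊂ E → Ideal.span E' ≠ I

/-- Membership of an integer in the semigroup generated by `n`. -/
def memZ {d : ℕ} (n : Fin d → ℕ) (z : ℤ) : Prop := ∃ x ∈ gen n, (x : ℤ) = z

/-- A numerical semigroup with Frobenius number `F = max (ℤ ∖ S)` is symmetric
if for every integer `z`, `z ∈ S ↔ F - z ∉ S`. -/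
def IsSymmetric {d : ℕ} (n : Fin d → ℕ) : Prop :=
  ∃ F : ℤ, ¬ memZ n F ∧ (∀ z : ℤ, F < z → memZ n z) ∧
    ∀ z : ℤ, memZ n z ↔ ¬ memZ n (F - z)

/-- A numerical semigroup with Frobenius number `F = max (ℤ ∖ S)` is
pseudo-symmetric if `F` is even and for every integer `z`,
`z ∈ S ↔ (z ≠ F/2 ∧ F - z ∉ S)`. -/
def IsPseudoSymmetric {d : ℕ} (n : Fin d → ℕ) : Prop :=
  ∃ F : ℤ, ¬ memZ n F ∧ (∀ z : ℤ, F < z → memZ n z) ∧ F % 2 = 0 ∧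
    ∀ z : ℤ, memZ n z ↔ (z ≠ F / 2 ∧ ¬ memZ n (F - z))

/-- The generators `q·m₁,…,q·m_d, p·n₁,…,p·n_e` of the gluing of two numerical
semigroups. -/
def glueGen {d e : ℕ} (mg : Fin d → ℕ) (ng : Fin e → ℕ) (p q : ℕ) :
    Fin (d + e) → ℕ :=
  Fin.append (fun i => q * mg i) (fun i => p * ng i)

/-!
Call an element half-factorial if all its factorizations have the same length. Factorizations of
`x` in the gluing `S` are pairs of factorizations of `u ∈ S₁` and `v ∈ S₂` with `q u + p v = x`,
and since `p` and `q` are coprime any two such pairs `(u, v)` differ by a multiple of `(p, -q)`.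
Passing from `(u + p, v)` to `(u, v + q)` replaces a factorization of `p` by one of `q`, so `x` is
half-factorial in `S` if and only if all the `u` and `v` are half-factorial and, as soon as such an
exchange is possible, `ord p = ord q`. On the other hand `q u ∈ AP(S, q s)` if and only if
`u ∈ AP(S₁, s)`, and `p v ∈ AP(S, q s)` if and only if `v ∈ AP(S₂, n q)`, because `n p` is the first
multiple of `p` lying in `s + S₁` and `p (n q) = q (n p)`. Finally `p ∈ AP(S₁, s)`, that is,
`1 < n`, says exactly that an exchange occurs for some element of `AP(S, q s)`.
-/

section Factorizations

variable {d : ℕ} (n a b : Fin d → ℕ) (k : ℕ)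

theorem sval_zero : sval n 0 = 0 := zero_dotProduct n

theorem sval_add : sval n (a + b) = sval n a + sval n b := add_dotProduct a b n

theorem sval_nsmul : sval n (k • a) = k * sval n a := smul_dotProduct k a n

theorem tlen_zero : tlen (0 : Fin d → ℕ) = 0 := Finset.sum_const_zero

theorem tlen_add : tlen (a + b) = tlen a + tlen b := Finset.sum_add_distrib

theorem tlen_nsmul : tlen (k • a) = k * tlen a := (Finset.mul_sum ..).symm

variable {n a}

theorem sval_eq_zero_iff (hn : ∀ i, 0 < n i) : sval n a = 0 ↔ a = 0 := by
  simp [sval, funext_iff, (hn _).ne']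

theorem zero_mem_gen : 0 ∈ gen n := ⟨0, (sval_zero n).symm⟩

variable {x y : ℕ}

theorem add_mem_gen (hx : x ∈ gen n) (hy : y ∈ gen n) : x + y ∈ gen n := by
  obtain ⟨a, rfl⟩ := hx
  obtain ⟨b, rfl⟩ := hy
  exact ⟨a + b, (sval_add n a b).symm⟩

theorem mul_mem_gen (hx : x ∈ gen n) : k * x ∈ gen n := by
  obtain ⟨a, rfl⟩ := hx
  exact ⟨k • a, (sval_nsmul n a k).symm⟩

end Factorizations

section Apery

variable {d : ℕ} {n : Fin d → ℕ} {s x y p t : ℕ}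

theorem notMem_apery_iff (hx : x ∈ gen n) : x ∉ Apery n s ↔ ∃ y ∈ gen n, x = s + y :=
  ⟨fun h => not_not.1 fun hy => h ⟨hx, hy⟩, fun hy h => h.2 hy⟩

theorem mem_apery_of_add_mem_apery (hx : x ∈ gen n) (hy : y ∈ gen n) (h : x + y ∈ Apery n s) :
    x ∈ Apery n s := by
  refine ⟨hx, ?_⟩
  rintro ⟨z, hz, rfl⟩
  exact h.2 ⟨z + y, add_mem_gen hz hy, add_assoc s z y⟩

theorem isLeast_sInf_mul_notMem_apery (hp : p ∈ gen n) (hp0 : 0 < p) (hs : s ∈ gen n) :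
    IsLeast {t : ℕ | t * p ∉ Apery n s} (sInf {t : ℕ | t * p ∉ Apery n s}) := by
  refine isLeast_csInf ⟨s, (notMem_apery_iff (mul_mem_gen s hp)).2 ?_⟩
  obtain ⟨r, rfl⟩ := Nat.exists_eq_add_of_lt hp0
  exact ⟨r * s, mul_mem_gen r hs, by ring⟩

theorem one_lt_iff_mem_apery (hp : p ∈ gen n) (ht : IsLeast {t : ℕ | t * p ∉ Apery n s} t) :
    1 < t ↔ p ∈ Apery n s := by
  constructor
  · contrapose!
    intro h
    exact ht.2 (by simpa using h)
  · intro h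
    have zero_mem : 0 ∈ Apery n s :=
      mem_apery_of_add_mem_apery zero_mem_gen hp (by rwa [zero_add])
    have ne_zero : t ≠ 0 := by
      rintro rfl
      exact ht.1 (by rwa [zero_mul])
    have ne_one : t ≠ 1 := by
      rintro rfl
      exact ht.1 (by rwa [one_mul])
    omega

end Apery

/-- An element `x` of the semigroup generated by `n` is half-factorial if all its factorizations
have the same length. This is vacuously true if `x` is not in the semigroup. -/
def IsHalfFactorial {d : ℕ} (n : Fin d → ℕ) (x : ℕ) : Prop :=
  ∀ a b : Fin d → ℕ, sval n a = x → sval n b = x → tlen a = tlen b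

section HalfFactorial

variable {d : ℕ} {n : Fin d → ℕ} {x y : ℕ}

theorem homogSet_iff_forall_isHalfFactorial (hn : ∀ i, 0 < n i) {T : Set ℕ} :
    HomogSet n T ↔ ∀ t ∈ T, IsHalfFactorial n t := by
  refine ⟨fun h t ht => ?_, fun h t ht _ => h t ht⟩
  rcases eq_or_ne t 0 with rfl | ht0
  · intro a b ha hb
    rw [(sval_eq_zero_iff hn).1 ha, (sval_eq_zero_iff hn).1 hb]
  · exact h t ht ht0

theorem IsHalfFactorial.ordS_eq_tlen (h : IsHalfFactorial n x) {a : Fin d → ℕ}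
    (ha : sval n a = x) : ordS n x = tlen a := by
  have lengths_eq : {l : ℕ | ∃ b : Fin d → ℕ, sval n b = x ∧ tlen b = l} = {tlen a} := by
    ext l
    constructor
    · rintro ⟨b, hb, rfl⟩
      exact h b a hb ha
    · rintro rfl
      exact ⟨a, ha, rfl⟩
  rw [ordS, lengths_eq, csSup_singleton]

theorem IsHalfFactorial.of_add_left (h : IsHalfFactorial n (x + y)) (hx : x ∈ gen n) :
    IsHalfFactorial n y := by
  obtain ⟨c, rfl⟩ := hx
  intro a b ha hb
  have := h (c + a) (c + b) (by rw [sval_add, ha]) (by rw [sval_add, hb])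
  simpa only [tlen_add, add_right_inj] using this

end HalfFactorial

theorem exists_eq_add_mul_of_mul_add_mul_eq {p q u v u' v' : ℕ} (hp0 : 0 < p)
    (hcop : Nat.Coprime p q) (hle : u ≤ u') (h : q * u + p * v = q * u' + p * v') :
    ∃ k, u' = u + k * p ∧ v = v' + k * q := by
  obtain ⟨t, rfl⟩ := Nat.exists_eq_add_of_le hle
  have hv : p * v = q * t + p * v' := by linarith [mul_add q u t]
  have hdvd : p ∣ q * t := (Nat.dvd_add_iff_left (Dvd.intro v' rfl)).2 ⟨v, hv.symm⟩
  obtain ⟨k, rfl⟩ := hcop.dvd_of_dvd_mul_left hdvd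
  refine ⟨k, by ring, Nat.eq_of_mul_eq_mul_left hp0 ?_⟩
  rw [hv]
  ring

section Gluing

variable {d e : ℕ} {mg : Fin d → ℕ} {ng : Fin e → ℕ} {p q s n x : ℕ}

theorem glueGen_pos (hmpos : ∀ i, 0 < mg i) (hnpos : ∀ i, 0 < ng i) (hp0 : 0 < p) (hq0 : 0 < q)
    (i : Fin (d + e)) : 0 < glueGen mg ng p q i := by
  cases i using Fin.addCases with
  | left i => simpa [glueGen] using ⟨hq0, hmpos i⟩
  | right i => simpa [glueGen] using ⟨hp0, hnpos i⟩

theorem sval_glueGen_append (a : Fin d → ℕ) (b : Fin e → ℕ) :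
    sval (glueGen mg ng p q) (Fin.append a b) = q * sval mg a + p * sval ng b := by
  simp only [sval, glueGen, Fin.sum_univ_add, Fin.append_left, Fin.append_right, Finset.mul_sum,
    mul_left_comm]

theorem tlen_append (a : Fin d → ℕ) (b : Fin e → ℕ) :
    tlen (Fin.append a b) = tlen a + tlen b := by
  simp only [tlen, Fin.sum_univ_add, Fin.append_left, Fin.append_right]

theorem exists_eq_append (c : Fin (d + e) → ℕ) :
    ∃ (a : Fin d → ℕ) (b : Fin e → ℕ), c = Fin.append a b :=
  ⟨_, _, Fin.append_castAdd_natAdd.symm⟩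

theorem mem_gen_glueGen_iff :
    x ∈ gen (glueGen mg ng p q) ↔ ∃ u ∈ gen mg, ∃ v ∈ gen ng, x = q * u + p * v := by
  constructor
  · rintro ⟨c, rfl⟩
    obtain ⟨a, b, rfl⟩ := exists_eq_append c
    exact ⟨_, ⟨a, rfl⟩, _, ⟨b, rfl⟩, sval_glueGen_append a b⟩
  · rintro ⟨_, ⟨a, rfl⟩, _, ⟨b, rfl⟩, rfl⟩
    exact ⟨Fin.append a b, (sval_glueGen_append a b).symm⟩

theorem mul_mem_gen_glueGen_left (hx : x ∈ gen mg) : q * x ∈ gen (glueGen mg ng p q) :=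
  mem_gen_glueGen_iff.2 ⟨x, hx, 0, zero_mem_gen, rfl⟩

theorem mul_mem_gen_glueGen_right (hx : x ∈ gen ng) : p * x ∈ gen (glueGen mg ng p q) :=
  mem_gen_glueGen_iff.2 ⟨0, zero_mem_gen, x, hx, (zero_add _).symm⟩

theorem mul_mem_gen_glueGen_left_iff (hp : p ∈ gen mg) (hp0 : 0 < p) (hq0 : 0 < q)
    (hcop : Nat.Coprime p q) : q * x ∈ gen (glueGen mg ng p q) ↔ x ∈ gen mg := by
  refine ⟨fun hx => ?_, mul_mem_gen_glueGen_left⟩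
  obtain ⟨u, hu, v, -, h⟩ := mem_gen_glueGen_iff.1 hx
  have hle : u ≤ x := Nat.le_of_mul_le_mul_left (by omega) hq0
  obtain ⟨k, rfl, -⟩ := exists_eq_add_mul_of_mul_add_mul_eq (v' := 0) hp0 hcop hle h.symm
  exact add_mem_gen hu (mul_mem_gen k hp)

theorem gen_glueGen_comm : gen (glueGen mg ng p q) = gen (glueGen ng mg q p) := by
  ext x
  simp only [mem_gen_glueGen_iff]
  constructor <;> exact fun ⟨u, hu, v, hv, h⟩ => ⟨v, hv, u, hu, h.trans (add_comm _ _)⟩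

theorem mul_mem_gen_glueGen_right_iff (hq : q ∈ gen ng) (hp0 : 0 < p) (hq0 : 0 < q)
    (hcop : Nat.Coprime p q) : p * x ∈ gen (glueGen mg ng p q) ↔ x ∈ gen ng := by
  rw [gen_glueGen_comm, mul_mem_gen_glueGen_left_iff hq hq0 hp0 hcop.symm]

theorem mul_mem_apery_glueGen_left_iff (hp : p ∈ gen mg) (hp0 : 0 < p) (hq0 : 0 < q)
    (hcop : Nat.Coprime p q) :
    q * x ∈ Apery (glueGen mg ng p q) (q * s) ↔ x ∈ Apery mg s := by
  have mem_gen_iff (z : ℕ) : q * z ∈ gen (glueGen mg ng p q) ↔ z ∈ gen mg :=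
    mul_mem_gen_glueGen_left_iff hp hp0 hq0 hcop
  refine and_congr (mem_gen_iff x) (not_congr ⟨?_, ?_⟩)
  · rintro ⟨y, hy, h⟩
    obtain ⟨z, rfl⟩ : q ∣ y := (Nat.dvd_add_right (dvd_mul_right q s)).1 (h ▸ dvd_mul_right q x)
    exact ⟨z, (mem_gen_iff z).1 hy, Nat.eq_of_mul_eq_mul_left hq0 (by rw [h, mul_add])⟩
  · rintro ⟨z, hz, rfl⟩
    exact ⟨q * z, (mem_gen_iff z).2 hz, mul_add q s z⟩

theorem mul_mem_apery_glueGen_right_iff (hp : p ∈ gen mg) (hq : q ∈ gen ng) (hp0 : 0 < p)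
    (hq0 : 0 < q) (hcop : Nat.Coprime p q) (hn : IsLeast {t : ℕ | t * p ∉ Apery mg s} n) :
    p * x ∈ Apery (glueGen mg ng p q) (q * s) ↔ x ∈ Apery ng (n * q) := by
  refine and_congr (mul_mem_gen_glueGen_right_iff hq hp0 hq0 hcop) (not_congr ⟨?_, ?_⟩)
  · rintro ⟨y, hy, h⟩
    obtain ⟨u, hu, v, hv, rfl⟩ := mem_gen_glueGen_iff.1 hy
    obtain ⟨k, hsu, rfl⟩ := exists_eq_add_mul_of_mul_add_mul_eq (u := 0) (v := x) (u' := s + u)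
      (v' := v) hp0 hcop (Nat.zero_le _) (by linarith)
    have hnk : n ≤ k := hn.2 ((notMem_apery_iff (mul_mem_gen k hp)).2 ⟨u, hu, by omega⟩)
    obtain ⟨j, rfl⟩ := Nat.exists_eq_add_of_le hnk
    exact ⟨v + j * q, add_mem_gen hv (mul_mem_gen j hq), by ring⟩
  · rintro ⟨z, hz, rfl⟩
    obtain ⟨y, hy, hnp⟩ := (notMem_apery_iff (mul_mem_gen n hp)).1 hn.1
    refine ⟨q * y + p * z, mem_gen_glueGen_iff.2 ⟨y, hy, z, hz, rfl⟩, ?_⟩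
    calc p * (n * q + z) = q * (n * p) + p * z := by ring
      _ = q * s + (q * y + p * z) := by rw [hnp]; ring

theorem mem_apery_and_mem_apery_of_mem_apery_glueGen (hp : p ∈ gen mg) (hq : q ∈ gen ng)
    (hp0 : 0 < p) (hq0 : 0 < q) (hcop : Nat.Coprime p q)
    (hn : IsLeast {t : ℕ | t * p ∉ Apery mg s} n) {u v : ℕ} (hu : u ∈ gen mg) (hv : v ∈ gen ng)
    (h : q * u + p * v ∈ Apery (glueGen mg ng p q) (q * s)) :
    u ∈ Apery mg s ∧ v ∈ Apery ng (n * q) := by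
  have hqu : q * u ∈ gen (glueGen mg ng p q) := mul_mem_gen_glueGen_left hu
  have hpv : p * v ∈ gen (glueGen mg ng p q) := mul_mem_gen_glueGen_right hv
  exact ⟨(mul_mem_apery_glueGen_left_iff hp hp0 hq0 hcop).1 (mem_apery_of_add_mem_apery hqu hpv h),
    (mul_mem_apery_glueGen_right_iff hp hq hp0 hq0 hcop hn).1
      (mem_apery_of_add_mem_apery hpv hqu (add_comm (q * u) (p * v) ▸ h))⟩

theorem IsHalfFactorial.of_mul_glueGen_left (h : IsHalfFactorial (glueGen mg ng p q) (q * x)) :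
    IsHalfFactorial mg x := by
  intro a b ha hb
  have := h (Fin.append a 0) (Fin.append b 0) (by simp [sval_glueGen_append, sval_zero, ha])
    (by simp [sval_glueGen_append, sval_zero, hb])
  simpa only [tlen_append, add_left_inj] using this

theorem IsHalfFactorial.of_mul_glueGen_right (h : IsHalfFactorial (glueGen mg ng p q) (p * x)) :
    IsHalfFactorial ng x := by
  intro a b ha hb
  have := h (Fin.append 0 a) (Fin.append 0 b) (by simp [sval_glueGen_append, sval_zero, ha])
    (by simp [sval_glueGen_append, sval_zero, hb])
  simpa only [tlen_append, add_right_inj] using this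

theorem IsHalfFactorial.ordS_eq_ordS_of_glueGen (hp : p ∈ gen mg) (hq : q ∈ gen ng)
    (h : IsHalfFactorial (glueGen mg ng p q) (q * p)) : ordS mg p = ordS ng q := by
  have p_halfFactorial : IsHalfFactorial mg p := h.of_mul_glueGen_left
  have q_halfFactorial : IsHalfFactorial ng q :=
    of_mul_glueGen_right (mg := mg) (by rwa [mul_comm])
  obtain ⟨a, ha⟩ := hp
  obtain ⟨b, hb⟩ := hq
  rw [p_halfFactorial.ordS_eq_tlen ha.symm, q_halfFactorial.ordS_eq_tlen hb.symm]
  have := h (Fin.append a 0) (Fin.append 0 b)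
    (by rw [sval_glueGen_append, ← ha, sval_zero, mul_zero, add_zero])
    (by rw [sval_glueGen_append, ← hb, sval_zero, mul_zero, zero_add, mul_comm])
  simpa only [tlen_append, tlen_zero, add_zero, zero_add] using this

theorem tlen_append_eq_tlen_append_of_le (hp : p ∈ gen mg) (hq : q ∈ gen ng) (hp0 : 0 < p)
    (hcop : Nat.Coprime p q) {a a' : Fin d → ℕ} {b b' : Fin e → ℕ}
    (ha' : IsHalfFactorial mg (sval mg a')) (hb : IsHalfFactorial ng (sval ng b))
    (hord : ∀ u ∈ gen mg, ∀ v ∈ gen ng,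
      q * (u + p) + p * v = q * sval mg a + p * sval ng b → ordS mg p = ordS ng q)
    (hle : sval mg a ≤ sval mg a')
    (h : q * sval mg a + p * sval ng b = q * sval mg a' + p * sval ng b') :
    tlen (Fin.append a b) = tlen (Fin.append a' b') := by
  have ⟨f, hf⟩ := hp
  have ⟨g, hg⟩ := hq
  obtain ⟨k, hk, hk'⟩ := exists_eq_add_mul_of_mul_add_mul_eq hp0 hcop hle h
  have tlen_a' : tlen a' = tlen a + k * tlen f := by
    rw [← tlen_nsmul, ← tlen_add]
    exact ha' _ _ rfl (by rw [sval_add, sval_nsmul, ← hf, hk])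
  have tlen_b : tlen b = tlen b' + k * tlen g := by
    rw [← tlen_nsmul, ← tlen_add]
    exact hb _ _ rfl (by rw [sval_add, sval_nsmul, ← hg, hk'])
  have tlen_exchange : k * tlen f = k * tlen g := by
    rcases k with - | j
    · simp only [zero_mul]
    have hu : sval mg a + j * p ∈ gen mg := add_mem_gen ⟨a, rfl⟩ (mul_mem_gen j hp)
    have hv : sval ng b' + j * q ∈ gen ng := add_mem_gen ⟨b', rfl⟩ (mul_mem_gen j hq)
    have hua' : sval mg a' = (sval mg a + j * p) + p := by rw [hk]; ring
    have hvb : sval ng b = (sval ng b' + j * q) + q := by rw [hk']; ring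
    have p_halfFactorial : IsHalfFactorial mg p := (hua' ▸ ha').of_add_left hu
    have q_halfFactorial : IsHalfFactorial ng q := (hvb ▸ hb).of_add_left hv
    rw [← p_halfFactorial.ordS_eq_tlen hf.symm, ← q_halfFactorial.ordS_eq_tlen hg.symm,
      hord _ hu _ ⟨b', rfl⟩ (by rw [← hua', h])]
  rw [tlen_append, tlen_append, tlen_a', tlen_b, tlen_exchange]
  ring

theorem isHalfFactorial_glueGen_iff (hp : p ∈ gen mg) (hq : q ∈ gen ng) (hp0 : 0 < p)
    (hcop : Nat.Coprime p q) :
    IsHalfFactorial (glueGen mg ng p q) x ↔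
      (∀ u ∈ gen mg, ∀ v ∈ gen ng, q * u + p * v = x →
        IsHalfFactorial mg u ∧ IsHalfFactorial ng v) ∧
      (∀ u ∈ gen mg, ∀ v ∈ gen ng, q * (u + p) + p * v = x → ordS mg p = ordS ng q) := by
  constructor
  · refine fun h => ⟨?_, ?_⟩
    · rintro u hu v hv rfl
      have hpv := h.of_add_left (mul_mem_gen_glueGen_left hu)
      rw [add_comm (q * u)] at h
      have hqu := h.of_add_left (mul_mem_gen_glueGen_right hv)
      exact ⟨hqu.of_mul_glueGen_left, hpv.of_mul_glueGen_right⟩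
    · rintro u hu v hv rfl
      have hqp : q * (u + p) + p * v = (q * u + p * v) + q * p := by ring
      rw [hqp] at h
      have huv : q * u + p * v ∈ gen (glueGen mg ng p q) :=
        mem_gen_glueGen_iff.2 ⟨u, hu, v, hv, rfl⟩
      exact (h.of_add_left huv).ordS_eq_ordS_of_glueGen hp hq
  · rintro ⟨hparts, hord⟩ c c' hc hc'
    obtain ⟨a, b, rfl⟩ := exists_eq_append c
    obtain ⟨a', b', rfl⟩ := exists_eq_append c'
    rw [sval_glueGen_append] at hc hc'
    obtain ⟨ha, hb⟩ := hparts _ ⟨a, rfl⟩ _ ⟨b, rfl⟩ hc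
    obtain ⟨ha', hb'⟩ := hparts _ ⟨a', rfl⟩ _ ⟨b', rfl⟩ hc'
    rcases le_total (sval mg a) (sval mg a') with hle | hle
    · exact tlen_append_eq_tlen_append_of_le hp hq hp0 hcop ha' hb (by rwa [hc]) hle
        (hc.trans hc'.symm)
    · exact (tlen_append_eq_tlen_append_of_le hp hq hp0 hcop ha hb' (by rwa [hc']) hle
        (hc'.trans hc.symm)).symm

end Gluing

theorem statement15_general {d e : ℕ} {mg : Fin d → ℕ} {ng : Fin e → ℕ}
    (hmpos : ∀ i, 0 < mg i) (hnpos : ∀ i, 0 < ng i) {p q s n : ℕ}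
    (hp : p ∈ gen mg) (hq : q ∈ gen ng) (hp0 : 0 < p) (hq0 : 0 < q) (hcop : Nat.Coprime p q)
    (hn : IsLeast {t : ℕ | t * p ∉ Apery mg s} n) :
    HomogSet (glueGen mg ng p q) (Apery (glueGen mg ng p q) (q * s)) ↔
      (HomogSet mg (Apery mg s) ∧ HomogSet ng (Apery ng (n * q)) ∧
        (1 < n → ordS mg p = ordS ng q)) := by
  rw [homogSet_iff_forall_isHalfFactorial hmpos, homogSet_iff_forall_isHalfFactorial hnpos,
    homogSet_iff_forall_isHalfFactorial (glueGen_pos hmpos hnpos hp0 hq0),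
    one_lt_iff_mem_apery hp hn]
  have left_iff (u : ℕ) : q * u ∈ Apery (glueGen mg ng p q) (q * s) ↔ u ∈ Apery mg s :=
    mul_mem_apery_glueGen_left_iff hp hp0 hq0 hcop
  have right_iff (v : ℕ) : p * v ∈ Apery (glueGen mg ng p q) (q * s) ↔ v ∈ Apery ng (n * q) :=
    mul_mem_apery_glueGen_right_iff hp hq hp0 hq0 hcop hn
  constructor
  · intro h
    exact ⟨fun u hu => (h _ ((left_iff u).2 hu)).of_mul_glueGen_left,
      fun v hv => (h _ ((right_iff v).2 hv)).of_mul_glueGen_right,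
      fun hpA => (h _ ((left_iff p).2 hpA)).ordS_eq_ordS_of_glueGen hp hq⟩
  · rintro ⟨hleft, hright, hord⟩ x hx
    refine (isHalfFactorial_glueGen_iff hp hq hp0 hcop).2 ⟨?_, ?_⟩
    · rintro u hu v hv rfl
      obtain ⟨huA, hvA⟩ :=
        mem_apery_and_mem_apery_of_mem_apery_glueGen hp hq hp0 hq0 hcop hn hu hv hx
      exact ⟨hleft u huA, hright v hvA⟩
    · rintro u hu v hv rfl
      obtain ⟨hupA, -⟩ := mem_apery_and_mem_apery_of_mem_apery_glueGen hp hq hp0 hq0 hcop hn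
        (add_mem_gen hu hp) hv hx
      exact hord (mem_apery_of_add_mem_apery hp hu (by rwa [add_comm]))

theorem pos_of_monotone_of_pos_zero {d : ℕ} (hd : 0 < d) {n : Fin d → ℕ} (hmono : Monotone n)
    (hpos : 0 < n ⟨0, hd⟩) (i : Fin d) : 0 < n i :=
  hpos.trans_le (hmono (Fin.mk_le_of_le_val (Nat.zero_le _)))

/-- with `n = min {n : n·p ∉ AP(S₁,s)}`, the Apéry set
`AP(S, q·s)` of the gluing is homogeneous iff `AP(S₁,s)` and `AP(S₂, n·q)`
are homogeneous and, when `n > 1`, `ord_{S₁}(p) = ord_{S₂}(q)`. -/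
theorem statement15
    {d e : ℕ} (hd : 0 < d) (he : 0 < e)
    (mg : Fin d → ℕ) (ng : Fin e → ℕ)
    (hmmono : StrictMono mg) (hnmono : StrictMono ng)
    (hmpos : 0 < mg ⟨0, hd⟩) (hnpos : 0 < ng ⟨0, he⟩)
    (hmnum : IsNumerical mg) (hnnum : IsNumerical ng)
    (hmmin : MinGen mg) (hnmin : MinGen ng)
    (p q : ℕ) (hp : p ∈ gen mg) (hq : q ∈ gen ng)
    (hp0 : 0 < p) (hq0 : 0 < q) (hcop : Nat.Coprime p q)
    (hpn : p ∉ Set.range mg) (hqn : q ∉ Set.range ng)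
    (s : ℕ) (hs : s ∈ gen mg) :
    HomogSet (glueGen mg ng p q) (Apery (glueGen mg ng p q) (q * s)) ↔
      (HomogSet mg (Apery mg s) ∧
        HomogSet ng (Apery ng (sInf {t : ℕ | t * p ∉ Apery mg s} * q)) ∧
        (1 < sInf {t : ℕ | t * p ∉ Apery mg s} →
          ordS mg p = ordS ng q)) :=
  statement15_general (pos_of_monotone_of_pos_zero hd hmmono.monotone hmpos)
    (pos_of_monotone_of_pos_zero he hnmono.monotone hnpos) hp hq hp0 hq0 hcop
    (isLeast_sInf_mul_notMem_apery hp hp0 hs)
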